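/- arXiv:1408.7035 — 6 statements merged into one kernel-verified Lean document; each statement's English description precedes it below -/
import Mathlib

section
/- Under the protocol model, suppose a ≤ b and the failure pattern is unstable exactly on rounds a through b, i.e., fail r ≠ ∅ for every r with a ≤ r ≤ b and fail r = ∅ for every r outside [a, b]. Then: (i) for every round r ≠ a+1 and all vehicles i, j, out i r = out j r (the uncertainty period is bounded by one round); (ii) for every round r with a+2 ≤ r ≤ b+1 and every vehicle i, out i r = none (disagreement correction: all vehicles use the default value); and (iii) for every round r ≥ b+3 and every vehicle i, out i r = decide (fun j => some (input j (r-1))) (after communication stabilizes, within one round of correction the protocol behaves as if no communication failure ever occurred). -/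
/-- Round-r message vector: `none` if the sender missed a message in the
previous round (for `r ≥ 1`), otherwise the sender's input of round `r`. -/
def msg {n : ℕ} {α : Type*} (input : Fin n → ℕ → α) (fail : ℕ → Finset (Fin n))
    (r : ℕ) (j : Fin n) : Option α :=
  if 1 ≤ r ∧ j ∈ fail (r - 1) then none else some (input j r)

/-- Value used by vehicle `i` at each round. -/
def out {n : ℕ} {α : Type*} (input : Fin n → ℕ → α)
    (dec : (Fin n → Option α) → Option α) (fail : ℕ → Finset (Fin n))
    (i : Fin n) : ℕ → Option α
  | 0 => none
  | r + 1 => if i ∈ fail r then none else dec (msg input fail r)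

/-!
A vehicle that misses a message in round `r` announces `none` in round `r + 1`. Hence an unstable
round `r` forces every vehicle to the default value two rounds later: a vehicle that receives every
message of round `r + 1` sees that `none`, and a vehicle that does not defaults anyway. After a
stable round all vehicles decide on the same vector. So vehicles can disagree only right after an
unstable round that is not itself preceded by an unstable one, and an interval `[a, b]` of unstable
rounds has only one such round, namely `a`.
-/

section

variable {n : ℕ} {α : Type*} {input : Fin n → ℕ → α} {dec : (Fin n → Option α) → Option α}
  {fail : ℕ → Finset (Fin n)} {r : ℕ}

theorem none_mem_range_msg_succ (h : (fail r).Nonempty) :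
    none ∈ Set.range (msg input fail (r + 1)) := by
  obtain ⟨j, hj⟩ := h
  exact ⟨j, if_pos ⟨r.succ_pos, hj⟩⟩

theorem msg_succ_of_eq_empty (h : fail r = ∅) :
    msg input fail (r + 1) = fun j => some (input j (r + 1)) := by
  funext j
  simp [msg, h]

theorem out_succ_of_eq_empty (h : fail r = ∅) (i : Fin n) :
    out input dec fail i (r + 1) = dec (msg input fail r) := by
  simp [out, h]

theorem out_add_two_eq_none (hdec : ∀ s : Fin n → Option α, none ∈ Set.range s → dec s = none)
    (h : (fail r).Nonempty) (i : Fin n) : out input dec fail i (r + 2) = none := by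
  have hmsg : dec (msg input fail (r + 1)) = none := hdec _ (none_mem_range_msg_succ h)
  simp only [out, hmsg, ite_self]

theorem out_add_two_of_eq_empty (h : fail r = ∅) (h' : fail (r + 1) = ∅) (i : Fin n) :
    out input dec fail i (r + 2) = dec (fun j => some (input j (r + 1))) := by
  rw [out_succ_of_eq_empty h', msg_succ_of_eq_empty h]

theorem out_succ_eq_out_succ (hdec : ∀ s : Fin n → Option α, none ∈ Set.range s → dec s = none)
    (h : (fail r).Nonempty → ∃ k, k + 1 = r ∧ (fail k).Nonempty) (i j : Fin n) :
    out input dec fail i (r + 1) = out input dec fail j (r + 1) := by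
  rcases (fail r).eq_empty_or_nonempty with hstable | hunstable
  · rw [out_succ_of_eq_empty hstable, out_succ_of_eq_empty hstable]
  · obtain ⟨k, rfl, hk⟩ := h hunstable
    rw [out_add_two_eq_none hdec hk, out_add_two_eq_none hdec hk]

end

theorem stmt0 {n : ℕ} {α : Type*} (input : Fin n → ℕ → α)
    (dec : (Fin n → Option α) → Option α)
    (hdec : ∀ s : Fin n → Option α, none ∈ Set.range s → dec s = none)
    (fail : ℕ → Finset (Fin n)) (a b : ℕ) (hab : a ≤ b)
    (hunstable : ∀ r, a ≤ r → r ≤ b → fail r ≠ ∅)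
    (hstable : ∀ r, ¬ (a ≤ r ∧ r ≤ b) → fail r = ∅) :
    (∀ r, r ≠ a + 1 → ∀ i j : Fin n,
        out input dec fail i r = out input dec fail j r) ∧
    (∀ r, a + 2 ≤ r → r ≤ b + 1 → ∀ i : Fin n,
        out input dec fail i r = none) ∧
    (∀ r, b + 3 ≤ r → ∀ i : Fin n,
        out input dec fail i r = dec (fun j => some (input j (r - 1)))) := by
  have hnonempty_iff (r : ℕ) : (fail r).Nonempty ↔ a ≤ r ∧ r ≤ b :=
    ⟨fun h => not_imp_comm.1 (hstable r) h.ne_empty,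
      fun h => Finset.nonempty_iff_ne_empty.2 (hunstable r h.1 h.2)⟩
  refine ⟨fun r hr i j => ?_, fun r hra hrb i => ?_, fun r hr i => ?_⟩
  · cases r with
    | zero => rfl
    | succ r =>
      refine out_succ_eq_out_succ hdec (fun h => ?_) i j
      have hr_mem := (hnonempty_iff r).1 h
      exact ⟨r - 1, by omega, (hnonempty_iff (r - 1)).2 (by omega)⟩
  · obtain ⟨k, rfl⟩ := Nat.exists_eq_add_of_le' (show 2 ≤ r by omega)
    exact out_add_two_eq_none hdec ((hnonempty_iff k).2 (by omega)) i
  · obtain ⟨k, rfl⟩ := Nat.exists_eq_add_of_le' (show 2 ≤ r by omega)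
    exact out_add_two_of_eq_empty (hstable k (by omega)) (hstable (k + 1) (by omega)) i
end

section
/- Under the protocol model, suppose a ≤ b and the failure pattern is unstable exactly on rounds a through b, i.e., fail r ≠ ∅ for every r with a ≤ r ≤ b and fail r = ∅ for every r outside [a, b]. Then disagreement is possible only at round a+1: for every round r ≠ a+1 and all vehicles i, j, out i r = out j r. -/
/-- Round `r` is the onset of a burst of unstable rounds: it is unstable and is either round `0` or
preceded by a stable round. The predecessor is named by `q + 1 = r` rather than `r - 1`, so that an
unstable round `0` counts as an onset. -/
def IsOnset {ι : Type*} (fail : ℕ → Finset ι) (r : ℕ) : Prop :=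
  (fail r).Nonempty ∧ ∀ q, q + 1 = r → fail q = ∅

theorem not_isOnset_iff {ι : Type*} {fail : ℕ → Finset ι} {r : ℕ} :
    ¬ IsOnset fail r ↔ fail r = ∅ ∨ ∃ q, q + 1 = r ∧ (fail q).Nonempty := by
  simp only [IsOnset, not_and_or, not_forall, exists_prop, Finset.nonempty_iff_ne_empty,
    ne_eq, not_not]

theorem IsOnset.eq_left_of_unstable_Icc {ι : Type*} {fail : ℕ → Finset ι} {a b r : ℕ}
    (hr : IsOnset fail r) (hunstable : ∀ q, a ≤ q → q ≤ b → fail q ≠ ∅)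
    (hstable : ∀ q, ¬ (a ≤ q ∧ q ≤ b) → fail q = ∅) : r = a := by
  obtain ⟨har, hrb⟩ : a ≤ r ∧ r ≤ b := by
    by_contra hout
    exact hr.1.ne_empty (hstable r hout)
  by_contra hne
  exact hunstable (r - 1) (by lia) (by lia) (hr.2 (r - 1) (by lia))

section Protocol

variable {n : ℕ} {α : Type*} (input : Fin n → ℕ → α) (dec : (Fin n → Option α) → Option α)
  {fail : ℕ → Finset (Fin n)} {r : ℕ}

theorem msg_succ_eq_none {j : Fin n} (hj : j ∈ fail r) : msg input fail (r + 1) j = none :=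
  if_pos ⟨Nat.le_add_left 1 r, hj⟩

theorem out_succ_of_stable (hr : fail r = ∅) (i : Fin n) :
    out input dec fail i (r + 1) = dec (msg input fail r) :=
  if_neg (hr ▸ Finset.notMem_empty i)

variable {dec}

theorem out_add_two_of_unstable
    (hdec : ∀ s : Fin n → Option α, none ∈ Set.range s → dec s = none)
    (hr : (fail r).Nonempty) (i : Fin n) : out input dec fail i (r + 2) = none := by
  obtain ⟨k, hk⟩ := hr
  have dec_eq_none : dec (msg input fail (r + 1)) = none :=
    hdec _ ⟨k, msg_succ_eq_none input hk⟩
  exact ite_eq_left_iff.2 fun _ => dec_eq_none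

/- Right after a stable round everyone decides from the same message vector. Two rounds after an
unstable one everyone uses `none`, because the vehicle that missed a message was silent in between
and `dec` rejects incomplete vectors. -/
theorem stmt3_general (hdec : ∀ s : Fin n → Option α, none ∈ Set.range s → dec s = none)
    (hr : ∀ q, IsOnset fail q → r ≠ q + 1) (i j : Fin n) :
    out input dec fail i r = out input dec fail j r := by
  cases r with
  | zero => rfl
  | succ r =>
    have not_onset : ¬ IsOnset fail r := fun h => hr r h rfl
    obtain stable | ⟨q, rfl, unstable⟩ := not_isOnset_iff.1 not_onset
    · rw [out_succ_of_stable input dec stable, out_succ_of_stable input dec stable]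
    · rw [out_add_two_of_unstable input hdec unstable,
        out_add_two_of_unstable input hdec unstable]

end Protocol

theorem stmt3 {n : ℕ} {α : Type*} (input : Fin n → ℕ → α)
    (dec : (Fin n → Option α) → Option α)
    (hdec : ∀ s : Fin n → Option α, none ∈ Set.range s → dec s = none)
    (fail : ℕ → Finset (Fin n)) (a b : ℕ) (hab : a ≤ b)
    (hunstable : ∀ r, a ≤ r → r ≤ b → fail r ≠ ∅)
    (hstable : ∀ r, ¬ (a ≤ r ∧ r ≤ b) → fail r = ∅) :
    ∀ r, r ≠ a + 1 → ∀ i j : Fin n,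
      out input dec fail i r = out input dec fail j r := by
  intro r hr i j
  exact stmt3_general input hdec
    (fun q hq => (hq.eq_left_of_unstable_Icc hunstable hstable).symm ▸ hr) i j
end

section
/- In the intra-round gossip model, the following invariant holds in every reachable state: for all vehicles i and all indices k, if A i k holds then D i k = some (v k). In other words, whenever a vehicle acknowledges having received (directly or transitively) vehicle k's datum of the current round, the datum it stores for k is exactly the datum that k originally sent; message transitivity maintains the consistency of the messages. -/
/-- Intra-round gossip network state: data arrays and acknowledgement arrays. -/
structure GState (n : ℕ) (α : Type*) where
  D : Fin n → Fin n → Option α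
  A : Fin n → Fin n → Bool

/-- Initial state: each vehicle holds only its own datum. -/
def initState {n : ℕ} {α : Type*} (v : Fin n → α) : GState n α where
  D := fun i k => if k = i then some (v i) else none
  A := fun i k => decide (k = i)

/-- Delivery event `(j, i)`: vehicle `i` receives vehicle `j`'s arrays and merges. -/
def deliver {n : ℕ} {α : Type*} (s : GState n α) (j i : Fin n) : GState n α where
  D := fun i' k =>
    if i' = i ∧ ((s.A j k = true ∧ k ≠ i) ∨ k = j) then s.D j k else s.D i' k
  A := fun i' k =>
    if i' = i ∧ ((s.A j k = true ∧ k ≠ i) ∨ k = j) then true else s.A i' k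

/-- One network step: some delivery event between distinct vehicles. -/
def gstep {n : ℕ} {α : Type*} (s t : GState n α) : Prop :=
  ∃ j i : Fin n, j ≠ i ∧ t = deliver s j i

/-- Reachability from the initial state by finitely many delivery events. -/
def reachable {n : ℕ} {α : Type*} (v : Fin n → α) (s : GState n α) : Prop :=
  Relation.ReflTransGen gstep (initState v) s

/-!
The invariant is inductive only together with the fact that every vehicle acknowledges its own
index: a delivery from `j` copies entry `j` without consulting `A j j`. With it, every entry
acknowledged after a delivery is a copy of an entry acknowledged before, so it carries the
original datum.
-/

namespace GState

variable {n : ℕ} {α : Type*} {v : Fin n → α} {s t : GState n α} {i j k l : Fin n}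

/-- The inductive invariant of a gossip round with sent values `v`: every vehicle acknowledges
itself, and acknowledged data agree with `v`. -/
structure IsConsistent (v : Fin n → α) (s : GState n α) : Prop where
  ack_self (i : Fin n) : s.A i i = true
  data_eq (i k : Fin n) : s.A i k = true → s.D i k = some (v k)

theorem isConsistent_initState (v : Fin n → α) : (initState v).IsConsistent v where
  ack_self i := decide_eq_true rfl
  data_eq i k hik := by
    obtain rfl : k = i := of_decide_eq_true hik
    exact if_pos rfl

theorem ack_deliver_of_ack (h : s.A l k = true) : (deliver s j i).A l k = true := by
  simp [deliver, h]

theorem exists_ack_and_data_deliver_eq (hj : s.A j j = true) (h : (deliver s j i).A l k = true) :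
    ∃ m, s.A m k = true ∧ (deliver s j i).D l k = s.D m k := by
  by_cases hcopy : l = i ∧ ((s.A j k = true ∧ k ≠ i) ∨ k = j)
  · have hjk : s.A j k = true := by
      rcases hcopy.2 with ⟨hack, -⟩ | rfl
      exacts [hack, hj]
    exact ⟨j, hjk, if_pos hcopy⟩
  · have hlk : s.A l k = true := (if_neg hcopy).symm.trans h
    exact ⟨l, hlk, if_neg hcopy⟩

theorem IsConsistent.deliver (hs : s.IsConsistent v) (j i : Fin n) :
    (deliver s j i).IsConsistent v where
  ack_self l := ack_deliver_of_ack (hs.ack_self l)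
  data_eq l k hlk := by
    obtain ⟨m, hmk, hdata⟩ := exists_ack_and_data_deliver_eq (hs.ack_self j) hlk
    exact hdata.trans (hs.data_eq m k hmk)

theorem IsConsistent.of_reflTransGen_gstep (hs : s.IsConsistent v)
    (hst : Relation.ReflTransGen gstep s t) : t.IsConsistent v := by
  induction hst with
  | refl => exact hs
  | tail _ hstep ih =>
    obtain ⟨j, i, -, rfl⟩ := hstep
    exact ih.deliver j i

end GState

theorem stmt8 {n : ℕ} {α : Type*} (v : Fin n → α) (s : GState n α)
    (hs : reachable v s) :
    ∀ i k : Fin n, s.A i k = true → s.D i k = some (v k) :=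
  ((GState.isConsistent_initState v).of_reflTransGen_gstep hs).data_eq
end

section
/- In the intra-round gossip model, in any reachable state in which every vehicle has acknowledged every index (A i k = true for all i and k), every vehicle's data array equals the vector of originally sent values: D i k = some (v k) for all i and k. In particular, all vehicles hold identical data arrays, i.e., D i = D j for all vehicles i, j; hence in a stable communication round, in which all messages are received, all vehicles end the round with the same proposed set of values. -/
/-- The gossip invariant with respect to the sent values `v`: a vehicle holds the sent value at each
index it has acknowledged and nothing elsewhere. `ack_self` makes this inductive, since a delivery
from `j` copies the entry at `j` without consulting the acknowledgements of `j`. -/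
structure GState.Faithful {n : ℕ} {α : Type*} (v : Fin n → α) (s : GState n α) : Prop where
  ack_self : ∀ i, s.A i i = true
  data_eq : ∀ i k, s.D i k = if s.A i k then some (v k) else none

section Invariant

variable {n : ℕ} {α : Type*} {v : Fin n → α} {s : GState n α}

theorem GState.faithful_initState (v : Fin n → α) : (initState v).Faithful v where
  ack_self i := decide_eq_true rfl
  data_eq i k := by
    simp only [initState, decide_eq_true_eq]
    split_ifs with hk
    · rw [hk]
    · rfl

theorem GState.Faithful.faithful_deliver (h : s.Faithful v) (j i : Fin n) :
    (deliver s j i).Faithful v where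
  ack_self i' := by simp only [deliver, h.ack_self, ite_self]
  data_eq i' k := by
    by_cases hcopy : i' = i ∧ ((s.A j k = true ∧ k ≠ i) ∨ k = j)
    · have hack : s.A j k = true := by
        rcases hcopy.2 with ⟨hjk, -⟩ | rfl
        · exact hjk
        · exact h.ack_self k
      simp only [deliver, if_pos hcopy, if_true]
      rw [h.data_eq, if_pos hack]
    · simp only [deliver, if_neg hcopy]
      exact h.data_eq i' k

theorem GState.Faithful.data_eq_of_ack_eq (h : s.Faithful v) {i j : Fin n}
    (hij : s.A i = s.A j) : s.D i = s.D j := by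
  funext k
  rw [h.data_eq, h.data_eq, hij]

theorem reachable.faithful (hs : reachable v s) : s.Faithful v := by
  induction hs with
  | refl => exact GState.faithful_initState v
  | tail _ hstep ih =>
    obtain ⟨j, i, -, rfl⟩ := hstep
    exact ih.faithful_deliver j i

end Invariant

theorem stmt9_general {n : ℕ} {α : Type*} (v : Fin n → α) (s : GState n α)
    (hs : reachable v s) :
    (∀ i k : Fin n, s.D i k = if s.A i k then some (v k) else none) ∧
    (∀ i j : Fin n, s.A i = s.A j → s.D i = s.D j) :=
  ⟨hs.faithful.data_eq, fun _ _ => hs.faithful.data_eq_of_ack_eq⟩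

theorem stmt9 {n : ℕ} {α : Type*} (v : Fin n → α) (s : GState n α)
    (hs : reachable v s) (hall : ∀ i k : Fin n, s.A i k = true) :
    (∀ i k : Fin n, s.D i k = some (v k)) ∧
    (∀ i j : Fin n, s.D i = s.D j) := by
  obtain ⟨hdata, hagree⟩ := stmt9_general v s hs
  exact ⟨fun i k => (hdata i k).trans (if_pos (hall i k)),
    fun i j => hagree i j (funext fun k => (hall i k).trans (hall j k).symm)⟩
end

section
/- In the intra-round gossip model, every vehicle maintains its own information consistent throughout the round: in every reachable state and for every vehicle i, D i i = some (v i) and A i i = true. That is, the merge rule never overwrites a vehicle's own entry with a value different from the one it originally sent. -/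
/- The merge rule sets an acknowledgement only to `true`, and it can replace a vehicle's own datum
only in a delivery from that vehicle to itself, which copies the datum onto itself. So own data are
constant and acknowledgements are monotone along every run, whatever state it starts from. -/

section

variable {n : ℕ} {α : Type*}

theorem initState_D_self (v : Fin n → α) (i : Fin n) : (initState v).D i i = some (v i) :=
  if_pos rfl

theorem initState_A_self (v : Fin n → α) (i : Fin n) : (initState v).A i i = true :=
  decide_eq_true rfl

theorem deliver_D_self (s : GState n α) (j i k : Fin n) : (deliver s j i).D k k = s.D k k := by
  refine ite_eq_right_iff.mpr ?_
  rintro ⟨rfl, ⟨-, k_ne_k⟩ | rfl⟩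
  · exact absurd rfl k_ne_k
  · rfl

theorem deliver_A_eq_true {s : GState n α} {i' k : Fin n} (hA : s.A i' k = true) (j i : Fin n) :
    (deliver s j i).A i' k = true := by
  simp only [deliver, hA, ite_self]

variable {s t : GState n α}

theorem D_self_eq_of_reflTransGen_gstep (hst : Relation.ReflTransGen gstep s t) (k : Fin n) :
    t.D k k = s.D k k := by
  induction hst with
  | refl => rfl
  | tail _ hstep ih =>
    obtain ⟨j, i, -, rfl⟩ := hstep
    exact (deliver_D_self _ j i k).trans ih

theorem A_eq_true_of_reflTransGen_gstep (hst : Relation.ReflTransGen gstep s t) {i k : Fin n}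
    (hA : s.A i k = true) : t.A i k = true := by
  induction hst with
  | refl => exact hA
  | tail _ hstep ih =>
    obtain ⟨j, i', -, rfl⟩ := hstep
    exact deliver_A_eq_true ih j i'

end

theorem stmt10 {n : ℕ} {α : Type*} (v : Fin n → α) (s : GState n α)
    (hs : reachable v s) :
    ∀ i : Fin n, s.D i i = some (v i) ∧ s.A i i = true := by
  intro i
  constructor
  · calc
      s.D i i = (initState v).D i i := D_self_eq_of_reflTransGen_gstep hs i
      _ = some (v i) := initState_D_self v i
  · exact A_eq_true_of_reflTransGen_gstep hs (initState_A_self v i)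
end

section
/- Round alignment of message deliveries: let L, D, b : ℝ with 0 ≤ b, 0 ≤ D, and L > 2*b + D, and let o : ι → ℝ be clock offsets for a family of vehicles (vehicle i's clock at real time t reads t + o i) satisfying |o i - o j| ≤ b for all i, j. Suppose vehicle i sends a message at real time t whose sender clock reading satisfies R*L + b ≤ t + o i and t + o i < (R+1)*L - b - D for some R : ℕ, and vehicle j receives the message at a real time t' with t ≤ t' ≤ t + D. Then R*L ≤ t' + o j < (R+1)*L; consequently ⌊(t' + o j)/L⌋ = R, i.e., the receiver's clock places the receipt in the same round R in which the message was sent, so vehicles receive messages only from the current round. -/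
/-!
A transmission keeps its clock reading at least `b` above the start of its round and more than
`b + D` below the end. The receiver's clock at the moment of sending is within `b` of the sender's,
and it then advances by at most `D` until receipt, so the two margins absorb the whole discrepancy.
-/

section OrderedRing

variable {K : Type*} [Ring K] [LinearOrder K]

/-- The clock readings that make up round `R` when rounds have length `L`. Rounds are indexed by
`ℤ`, so that readings before the origin also belong to a round. -/
def roundInterval (L : K) (R : ℤ) : Set K :=
  Set.Ico (R * L) ((R + 1) * L)

/-- The clock readings at which a vehicle may transmit in round `R`, for clocks synchronized up to
`b` and messages delayed by at most `D`. -/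
def sendWindow (L b D : K) (R : ℤ) : Set K :=
  Set.Ico (R * L + b) ((R + 1) * L - b - D)

variable [IsOrderedAddMonoid K] {L b D x y z : K} {R : ℤ}

theorem pos_of_mem_roundInterval (hx : x ∈ roundInterval L R) : 0 < L := by
  have hlt : (R : K) * L < (R + 1) * L := hx.1.trans_lt hx.2
  rwa [add_one_mul, lt_add_iff_pos_right] at hlt

/-- Here `x` and `z` are the readings of the sender and the receiver at the time of sending, and `y`
is the receiver's reading at receipt. -/
theorem mem_roundInterval_of_mem_sendWindow (hx : x ∈ sendWindow L b D R)
    (hxz : |x - z| ≤ b) (hzy : z ≤ y) (hyz : y ≤ z + D) : y ∈ roundInterval L R := by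
  constructor
  · calc
      (R : K) * L ≤ x - b := le_sub_iff_add_le.mpr hx.1
      _ ≤ z := sub_le_comm.mp (abs_le.mp hxz).2
      _ ≤ y := hzy
  · have hzx : z ≤ x + b := sub_le_iff_le_add'.mp (abs_sub_le_iff.mp hxz).2
    calc
      y ≤ z + D := hyz
      _ ≤ x + b + D := by gcongr
      _ < (R + 1) * L := by
        rw [add_right_comm]
        exact lt_sub_iff_add_lt.mp (lt_sub_iff_add_lt.mp hx.2)

end OrderedRing

section OrderedField

variable {K : Type*} [Field K] [LinearOrder K] [IsStrictOrderedRing K] [FloorRing K]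

theorem floor_div_eq_of_mem_roundInterval {L x : K} {R : ℤ} (hx : x ∈ roundInterval L R) :
    ⌊x / L⌋ = R := by
  have hL : 0 < L := pos_of_mem_roundInterval hx
  exact Int.floor_eq_iff.mpr ⟨(le_div_iff₀ hL).mpr hx.1, (div_lt_iff₀ hL).mpr hx.2⟩

/-- The delay bound `D` is measured on the receiver's clock, so the clocks need not run at a common
rate. -/
theorem stmt11_general {ι T : Type*} {L b D : K} (clock : ι → T → K) {i j : ι} {t t' : T} {R : ℤ}
    (hsync : |clock i t - clock j t| ≤ b) (hsend : clock i t ∈ sendWindow L b D R)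
    (hrecv₁ : clock j t ≤ clock j t') (hrecv₂ : clock j t' ≤ clock j t + D) :
    clock j t' ∈ roundInterval L R ∧ ⌊clock j t' / L⌋ = R := by
  have hround := mem_roundInterval_of_mem_sendWindow hsend hsync hrecv₁ hrecv₂
  exact ⟨hround, floor_div_eq_of_mem_roundInterval hround⟩

end OrderedField

theorem stmt11 {ι : Type*} (L D b : ℝ) (hb : 0 ≤ b) (hD : 0 ≤ D)
    (hL : L > 2 * b + D) (o : ι → ℝ) (ho : ∀ i j, |o i - o j| ≤ b)
    (i j : ι) (t t' : ℝ) (R : ℕ)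
    (hsend1 : R * L + b ≤ t + o i)
    (hsend2 : t + o i < (R + 1) * L - b - D)
    (hrecv1 : t ≤ t') (hrecv2 : t' ≤ t + D) :
    ((R : ℝ) * L ≤ t' + o j ∧ t' + o j < (R + 1) * L) ∧
      ⌊(t' + o j) / L⌋ = (R : ℤ) :=
  stmt11_general (fun k s => s + o k) (by simpa only [add_sub_add_left_eq_sub] using ho i j)
    ⟨hsend1, hsend2⟩ (by gcongr) (by linarith)
end
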